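/- arXiv:2510.05316 — 5 statements merged into one kernel-verified Lean document; each statement's English description precedes it below -/
import Mathlib

section
/- Let $\iota$ be a finite index set and for each $i \in \iota$ let $d_i \ge 1$. Consider the joint Hilbert space $\mathbb{C}^{\prod_{i} [d_i]}$ (registers $\mathcal{R}_i = \mathbb{C}^{d_i}$). Let $(P_1^i)_{i\in\iota}$ and $(P_2^i)_{i\in\iota}$ be two families of orthogonal projection matrices, $P_b^i \in M_{d_i}(\mathbb{C})$, and let $\ell$ be an upper bound on the number of indices $i$ with $P_1^i \ne P_2^i$. Let $\rho$ be a density matrix on the joint space. For $b \in \{1,2\}$ and an outcome string $s : \iota \to \{0,1\}$ let $M_b(s)$ be the joint-space matrix with entries $M_b(s)(x,y) = \prod_{i\in\iota} Q_b^{i,s(i)}(x_i,y_i)$, where $Q_b^{i,1} := P_b^i$ and $Q_b^{i,0} := I - P_b^i$, and set $\Pr_b[s] := \mathrm{Tr}(M_b(s)\,\rho)$. Then for every integer $N$, $\sum_{s : |\{i : s(i)=1\}| \ge N} \Pr_1[s] \;\le\; \sum_{s : |\{i : s(i)=1\}| \ge N - \ell} \Pr_2[s]$. -/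
open scoped Classical ComplexOrder

/-!
The effects of each measurement sum to the identity, so summing over the outcomes of the registers
in `E` removes every trace of the measurements made there: an event that does not look at these
outcomes corresponds to the same operator for both families. If `T` contains every string that
agrees outside `E` with a string of the event `S`, then such an event lies between `S` and `T`, and
positivity of the joint effects gives `Pr₁[S] ≤ Pr₂[T]`. Tails of the count are an instance, since
modifying a string on `E` lowers its number of accepting outcomes by at most `E.card`.
-/

open scoped MatrixOrder
open Finset

lemma sum_prod_filter_restrict {ι R : Type*} [Fintype ι] [DecidableEq ι] [CommSemiring R]
    {κ : ι → Type*} [∀ i, Fintype (κ i)] (q : ι → Prop) [DecidablePred q]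
    (p : (∀ i : {i // ¬q i}, κ i) → Prop) [DecidablePred p] (f : ∀ i, κ i → R) :
    ∑ s : ∀ i, κ i with p (Subtype.restrict (¬q ·) s), ∏ i, f i (s i) =
      (∏ i : {i // q i}, ∑ c, f i c) * ∑ u with p u, ∏ i : {i // ¬q i}, f i (u i) := by
  simp only [sum_filter]
  rw [Fintype.prod_sum, Fintype.sum_mul_sum, ← Fintype.sum_prod_type',
    ← (Equiv.piEquivPiSubtypeProd q κ).sum_comp]
  refine Fintype.sum_congr _ _ fun s => ?_
  rw [mul_ite, mul_zero, ← Fintype.prod_subtype_mul_prod_subtype q]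
  rfl

section PiKronecker

/-- The tensor product of a finite family of matrices, as a matrix on the joint space: the version
of `Matrix.kronecker` for a family of factors, with rows and columns indexed by dependent functions.
It represents the operator acting as `A i` on the `i`-th register. -/
def piKronecker {ι R : Type*} [Fintype ι] [CommMonoid R] {m n : ι → Type*}
    (A : ∀ i, Matrix (m i) (n i) R) : Matrix (∀ i, m i) (∀ i, n i) R :=
  Matrix.of fun x y => ∏ i, A i (x i) (y i)

variable {ι : Type*} [Fintype ι] {n : ι → Type*}

lemma piKronecker_nonneg {𝕜 : Type*} [RCLike 𝕜] {A : ∀ i, Matrix (n i) (n i) 𝕜}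
    (hA : ∀ i, 0 ≤ A i) : 0 ≤ piKronecker A := by
  suffices h : ∀ t : Finset ι,
      (Matrix.of fun x y : ∀ i, n i => ∏ i ∈ t, A i (x i) (y i)).PosSemidef from (h univ).nonneg
  intro t
  induction t using Finset.induction_on with
  | empty => exact (Matrix.PosSemidef.one (n := Unit)).submatrix fun _ => ()
  | insert i t hi ih =>
    -- A tensor product is the Hadamard product of the pullbacks of its factors.
    simp only [prod_insert hi]
    exact ((Matrix.nonneg_iff_posSemidef.1 (hA i)).submatrix fun x : ∀ i, n i => x i).hadamard ih

variable {κ : ι → Type*} [∀ i, Fintype (κ i)]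

lemma sum_piKronecker_filter_restrict_congr [DecidableEq ι] {R : Type*} [CommSemiring R]
    {m : ι → Type*} {F G : ∀ i, κ i → Matrix (m i) (n i) R} (q : ι → Prop)
    (hFG : ∀ i, ¬q i → F i = G i) (hsum : ∀ i, q i → ∑ c, F i c = ∑ c, G i c)
    (p : (∀ i : {i // ¬q i}, κ i) → Prop) [DecidablePred p] :
    ∑ s : ∀ i, κ i with p (Subtype.restrict (¬q ·) s), piKronecker (fun i => F i (s i)) =
      ∑ s : ∀ i, κ i with p (Subtype.restrict (¬q ·) s), piKronecker (fun i => G i (s i)) := by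
  ext x y
  simp only [Matrix.sum_apply, piKronecker, Matrix.of_apply]
  rw [sum_prod_filter_restrict q p fun i c => F i c (x i) (y i),
    sum_prod_filter_restrict q p fun i c => G i c (x i) (y i)]
  congr 1
  · refine Fintype.prod_congr _ _ fun i => ?_
    simp only [← Matrix.sum_apply, hsum i i.2]
  · refine sum_congr rfl fun u _ => Fintype.prod_congr _ _ fun i => ?_
    rw [hFG i i.2]

theorem sum_piKronecker_le_of_agree_off {𝕜 : Type*} [RCLike 𝕜]
    {F G : ∀ i, κ i → Matrix (n i) (n i) 𝕜} (hF : ∀ i c, 0 ≤ F i c) (hG : ∀ i c, 0 ≤ G i c)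
    {E : Finset ι} (hFG : ∀ i ∉ E, F i = G i) (hsum : ∀ i ∈ E, ∑ c, F i c = ∑ c, G i c)
    {S T : Finset (∀ i, κ i)} (hST : ∀ s ∈ S, ∀ t, (∀ i ∉ E, s i = t i) → t ∈ T) :
    ∑ s ∈ S, piKronecker (fun i => F i (s i)) ≤ ∑ t ∈ T, piKronecker (fun i => G i (t i)) := by
  let r : (∀ i, κ i) → ∀ i : {i // i ∉ E}, κ i := Subtype.restrict (· ∉ E)
  have hS : S ⊆ ({t | ∃ s ∈ S, r s = r t} : Finset _) := fun s hs => by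
    simpa using ⟨s, hs, rfl⟩
  have hT : ({t | ∃ s ∈ S, r s = r t} : Finset _) ⊆ T := fun t ht => by
    obtain ⟨s, hs, hst⟩ := (mem_filter_univ _).1 ht
    exact hST s hs t fun i hi => congrFun hst ⟨i, hi⟩
  calc
    _ ≤ ∑ t with ∃ s ∈ S, r s = r t, piKronecker (fun i => F i (t i)) :=
      sum_le_sum_of_subset_of_nonneg hS fun t _ _ => piKronecker_nonneg fun i => hF i (t i)
    _ = ∑ t with ∃ s ∈ S, r s = r t, piKronecker (fun i => G i (t i)) :=
      sum_piKronecker_filter_restrict_congr (· ∈ E) hFG hsum fun u => ∃ s ∈ S, r s = u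
    _ ≤ _ :=
      sum_le_sum_of_subset_of_nonneg hT fun t _ _ => piKronecker_nonneg fun i => hG i (t i)

end PiKronecker

section BinaryMeasurement

/-- The two-outcome measurement with effect `a` for acceptance (`true`) and `1 - a` for rejection
(`false`). For a projection `a` this is the projective measurement `{a, 1 - a}`; in general it is a
POVM as soon as `0 ≤ a ≤ 1`. -/
def binaryMeasurement {R : Type*} [One R] [Sub R] (a : R) (c : Bool) : R :=
  if c then a else 1 - a

variable {R : Type*} [AddCommGroupWithOne R]

lemma binaryMeasurement_nonneg [PartialOrder R] [IsOrderedAddMonoid R] {a : R}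
    (ha : a ∈ Set.Icc 0 1) (c : Bool) : 0 ≤ binaryMeasurement a c := by
  cases c
  · exact sub_nonneg.2 ha.2
  · exact ha.1

lemma sum_binaryMeasurement (a : R) : ∑ c, binaryMeasurement a c = 1 := by
  simp [binaryMeasurement]

end BinaryMeasurement

lemma card_filter_le_card_filter_add_card {ι : Type*} [Fintype ι]
    {p q : ι → Prop} [DecidablePred p] [DecidablePred q] {E : Finset ι}
    (h : ∀ i ∉ E, p i → q i) : #{i | p i} ≤ #{i | q i} + #E := by
  refine (card_le_card fun i hi => ?_).trans (card_union_le _ E)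
  simp only [mem_union, mem_filter_univ] at hi ⊢
  exact or_iff_not_imp_right.2 (h i · hi)

theorem measurement_replacement_tail_bound_general {ι 𝕜 : Type*} [Fintype ι] [DecidableEq ι]
    [RCLike 𝕜] {n : ι → Type*} [∀ i, DecidableEq (n i)]
    {P Q : ∀ i, Matrix (n i) (n i) 𝕜}
    (hP : ∀ i, P i ∈ Set.Icc 0 1) (hQ : ∀ i, Q i ∈ Set.Icc 0 1)
    {ℓ : ℕ} {E : Finset ι} (hEcard : #E ≤ ℓ) (hE : ∀ i ∉ E, P i = Q i) (N : ℤ) :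
    ∑ s : ι → Bool with N ≤ (#{i | s i} : ℤ), piKronecker (fun i => binaryMeasurement (P i) (s i)) ≤
      ∑ s : ι → Bool with N - ℓ ≤ (#{i | s i} : ℤ),
        piKronecker (fun i => binaryMeasurement (Q i) (s i)) := by
  refine sum_piKronecker_le_of_agree_off (fun i => binaryMeasurement_nonneg (hP i))
    (fun i => binaryMeasurement_nonneg (hQ i)) (fun i hi => by rw [hE i hi])
    (fun i _ => by simp only [sum_binaryMeasurement]) fun s hs t hst => ?_
  have hcount : #{i | s i} ≤ #{i | t i} + #E :=
    card_filter_le_card_filter_add_card fun i hi => (hst i hi ▸ ·)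
  simp only [mem_filter_univ] at hs ⊢
  lia

section Trace

variable {m 𝕜 : Type*} [Fintype m] [RCLike 𝕜] {ρ : Matrix m m 𝕜}

lemma trace_mul_nonneg {A : Matrix m m 𝕜} (hA : 0 ≤ A) (hρ : ρ.PosSemidef) :
    0 ≤ (A * ρ).trace := by
  obtain ⟨B, rfl⟩ := CStarAlgebra.nonneg_iff_eq_star_mul_self.1 hA
  rw [Matrix.trace_mul_cycle, Matrix.trace_mul_cycle]
  exact (hρ.mul_mul_conjTranspose_same B).trace_nonneg

lemma sum_re_trace_mul_le_of_sum_le (hρ : ρ.PosSemidef) {α β : Type*} {S : Finset α}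
    {T : Finset β} {A : α → Matrix m m 𝕜} {B : β → Matrix m m 𝕜}
    (h : ∑ s ∈ S, A s ≤ ∑ t ∈ T, B t) :
    ∑ s ∈ S, RCLike.re (A s * ρ).trace ≤ ∑ t ∈ T, RCLike.re (B t * ρ).trace := by
  have htrace := (RCLike.nonneg_iff.1 (trace_mul_nonneg (sub_nonneg.2 h) hρ)).1
  simpa only [sub_mul, Matrix.trace_sub, sum_mul, Matrix.trace_sum, map_sub, map_sum, sub_nonneg]
    using htrace

end Trace

/-- **Changing at most `ℓ` per-register projective measurements shifts the acceptance-count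
tail by at most `ℓ`.** Two families `P 0 i`, `P 1 i` of orthogonal projections acting on
disjoint registers `Fin (d i)` differ on at most `ℓ` indices (all differences lie in the
finite set `E` of cardinality `≤ ℓ`). For a density matrix `ρ` on the joint space, the
probability (under the first family) of at least `N` accepting outcomes is at most the
probability (under the second family) of at least `N - ℓ` accepting outcomes. -/
theorem measurement_replacement_tail_bound
    {ι : Type*} [Fintype ι] [DecidableEq ι]
    (d : ι → ℕ) (hd : ∀ i, 1 ≤ d i)
    (P : Fin 2 → ∀ i, Matrix (Fin (d i)) (Fin (d i)) ℂ)
    (hHerm : ∀ b i, (P b i).IsHermitian)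
    (hIdem : ∀ b i, P b i * P b i = P b i)
    (ℓ : ℕ) (E : Finset ι) (hEcard : E.card ≤ ℓ)
    (hE : ∀ i ∉ E, P 0 i = P 1 i)
    (ρ : Matrix (∀ i, Fin (d i)) (∀ i, Fin (d i)) ℂ)
    (hρ : ρ.PosSemidef) (hρtr : ρ.trace = 1)
    (M : Fin 2 → (ι → Bool) → Matrix (∀ i, Fin (d i)) (∀ i, Fin (d i)) ℂ)
    (hM : ∀ b s x y, M b s x y =
      ∏ i, (if s i then P b i else 1 - P b i) (x i) (y i))
    (N : ℤ) :
    ∑ s ∈ Finset.univ.filter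
        (fun s : ι → Bool => N ≤ ((Finset.univ.filter fun i => s i).card : ℤ)),
        ((M 0 s * ρ).trace).re
    ≤ ∑ s ∈ Finset.univ.filter
        (fun s : ι → Bool => N - (ℓ : ℤ) ≤ ((Finset.univ.filter fun i => s i).card : ℤ)),
        ((M 1 s * ρ).trace).re := by
  have hEffect : ∀ b i, P b i ∈ Set.Icc 0 1 := fun b i =>
    have hProj : IsStarProjection (P b i) := ⟨hIdem b i, hHerm b i⟩
    ⟨hProj.nonneg, hProj.le_one⟩
  obtain rfl : M = fun b s => piKronecker fun i => binaryMeasurement (P b i) (s i) :=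
    funext₂ fun b s => Matrix.ext (hM b s)
  exact sum_re_trace_mul_le_of_sum_le hρ <|
    measurement_replacement_tail_bound_general (hEffect 0) (hEffect 1) hEcard hE N
end

section
/- Let $S \subseteq \mathbb{F}_2^m$ be a subspace, $\Delta \in \mathbb{F}_2^m \setminus S$, and $x, z \in \mathbb{F}_2^m$. Set $U := X^x Z^z$. Then, as operators on $\mathbb{C}^{\mathbb{F}_2^m}$, $U\,|S\rangle\langle S|\,U^{\dagger} + U\,|S+\Delta\rangle\langle S+\Delta|\,U^{\dagger} \;=\; H^{\otimes m}\, X^z\, \Pi[S^{\perp}]\, X^z\, H^{\otimes m}\, X^x\, \Pi[S_{\Delta}]\, X^x.$ That is, the orthogonal projector onto the span of the two encoded coset states equals the composition of the standard-basis codespace check followed by the Hadamard-basis codespace check. -/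
open scoped Classical Matrix

noncomputable section

/-- The vector space `𝔽₂^m`. -/
abbrev Vec (m : ℕ) := Fin m → ZMod 2

/-- The bilinear form `⟨v,w⟩ = ∑ᵢ vᵢ wᵢ ∈ 𝔽₂`. -/
def bform {m : ℕ} (v w : Vec m) : ZMod 2 := ∑ i, v i * w i

/-- The sign `(-1)^{⟨v,w⟩} ∈ ℂ`. -/
def sgn {m : ℕ} (v w : Vec m) : ℂ := (-1 : ℂ) ^ (bform v w).val

/-- The Pauli-X unitary `X^x : |v⟩ ↦ |v + x⟩`, as a matrix. -/
def Xop {m : ℕ} (x : Vec m) : Matrix (Vec m) (Vec m) ℂ :=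
  Matrix.of fun a b => if a = b + x then 1 else 0

/-- The Pauli-Z unitary `Z^z : |v⟩ ↦ (-1)^{⟨z,v⟩} |v⟩`, as a matrix. -/
def Zop {m : ℕ} (z : Vec m) : Matrix (Vec m) (Vec m) ℂ :=
  Matrix.diagonal fun v => sgn z v

/-- The `m`-fold Hadamard transform, with entries `(H^{⊗m})_{w,v} = 2^{-m/2} (-1)^{⟨v,w⟩}`. -/
def Had (m : ℕ) : Matrix (Vec m) (Vec m) ℂ :=
  Matrix.of fun w v => (((Real.sqrt (2 ^ m))⁻¹ : ℝ) : ℂ) * sgn v w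

/-- The projector `Π[A] = ∑_{v ∈ A} |v⟩⟨v|`. -/
def proj {m : ℕ} (A : Set (Vec m)) : Matrix (Vec m) (Vec m) ℂ :=
  Matrix.of fun a b => if a = b ∧ a ∈ A then 1 else 0

/-- The normalized coset state `|A + t⟩ = |A|^{-1/2} ∑_{v ∈ A + t} |v⟩`, as a vector of
amplitudes. -/
def cosetState {m : ℕ} (A : Set (Vec m)) (t : Vec m) : Vec m → ℂ :=
  fun v => if v ∈ (· + t) '' A then (((Real.sqrt (Nat.card A))⁻¹ : ℝ) : ℂ) else 0

/-- The dual `A^⊥ = {w : ⟨v,w⟩ = 0 for all v ∈ A}`. -/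
def perp {m : ℕ} (A : Set (Vec m)) : Set (Vec m) := {w | ∀ v ∈ A, bform v w = 0}

/-- `S_Δ = S ∪ (S + Δ)`. -/
def SDelta {m : ℕ} (S : Submodule (ZMod 2) (Vec m)) (Δ : Vec m) : Set (Vec m) :=
  (S : Set (Vec m)) ∪ ((· + Δ) '' (S : Set (Vec m)))

/-- The rank-one projector `|ψ⟩⟨ψ|`. -/
def outer {m : ℕ} (ψ : Vec m → ℂ) : Matrix (Vec m) (Vec m) ℂ :=
  Matrix.of fun a b => ψ a * star (ψ b)

end

/-!
The operators `X^s`, `s ∈ S`, form an abelian group whose average is the projector onto the span of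
all coset states of `S`. The Hadamard transform exchanges `Z^s` and `X^s`, and by orthogonality of
characters the average of the `Z^s` is `Π[S^⊥]`; hence `H Π[S^⊥] H` is that projector, and cutting
it down by `Π[S + t]` leaves `|S + t⟩⟨S + t|`. The one-time pad is then moved across the checks:
`Z^z` commutes with the standard-basis check and `X^x` with the Hadamard-basis check, because the
operators of each pair are diagonal in the same basis.
-/

section

variable {G : Type*} [AddCommGroup G] [Module (ZMod 2) G]

theorem eq_add_iff_add_eq (a b x : G) : a = b + x ↔ a + x = b := by
  rw [← sub_eq_iff_eq_add, ZModModule.sub_eq_add]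

theorem add_eq_zero_iff_eq (a b : G) : a + b = 0 ↔ a = b := by
  rw [← ZModModule.sub_eq_add, sub_eq_zero]

theorem mem_image_add_right_iff (A : Set G) (v t : G) : v ∈ (· + t) '' A ↔ v + t ∈ A := by
  rw [Set.image_add_right, Set.mem_preimage, ZModModule.neg_eq_self]

end

section

variable {m : ℕ}

theorem bform_comm (v w : Vec m) : bform v w = bform w v :=
  dotProduct_comm v w

theorem bform_add_left (u v w : Vec m) : bform (u + v) w = bform u w + bform v w :=
  add_dotProduct u v w

theorem sgn_comm (v w : Vec m) : sgn v w = sgn w v := by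
  rw [sgn, sgn, bform_comm]

theorem sgn_zero_left (w : Vec m) : sgn 0 w = 1 := by
  simp [sgn, bform]

theorem sgn_add_left (u v w : Vec m) : sgn (u + v) w = sgn u w * sgn v w := by
  rw [sgn, bform_add_left]
  exact (AddChar.zmodChar 2 (ζ := (-1 : ℂ)) (by norm_num)).map_add_eq_mul _ _

theorem sgn_add_right (u v w : Vec m) : sgn u (v + w) = sgn u v * sgn u w := by
  simp only [sgn_comm u, sgn_add_left]

theorem star_sgn (v w : Vec m) : star (sgn v w) = sgn v w := by
  simp [sgn]

theorem sgn_eq_one_iff (v w : Vec m) : sgn v w = 1 ↔ bform v w = 0 := by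
  rw [sgn]
  generalize bform v w = c
  obtain rfl | rfl : c = 0 ∨ c = 1 := by decide +revert
  · simp
  · norm_num [ZMod.val_one]

/-- The character `v ↦ (-1)^{⟨v,w⟩}` of the additive group `𝔽₂^m`, bundled so that Mathlib's
orthogonality of characters applies to it. -/
def sgnChar (w : Vec m) : AddChar (Vec m) ℂ where
  toFun v := sgn v w
  map_zero_eq_one' := sgn_zero_left w
  map_add_eq_mul' u v := sgn_add_left u v w

theorem sgnChar_eq_zero_iff (w : Vec m) : sgnChar w = 0 ↔ w = 0 := by
  rw [AddChar.eq_zero_iff]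
  refine ⟨fun h => dotProduct_eq_zero w fun v => ?_, ?_⟩
  · exact (bform_comm w v).trans ((sgn_eq_one_iff v w).mp (h v))
  · rintro rfl v
    exact (sgn_comm v 0).trans (sgn_zero_left v)

theorem sgnChar_comp_subtype_eq_zero_iff (S : Submodule (ZMod 2) (Vec m)) (w : Vec m) :
    (sgnChar w).compAddMonoidHom S.toAddSubgroup.subtype = 0 ↔ w ∈ perp (S : Set (Vec m)) := by
  rw [AddChar.eq_zero_iff]
  exact Subtype.forall.trans (forall₂_congr fun v _ => sgn_eq_one_iff v w)

theorem sum_sgn (w : Vec m) : ∑ v : Vec m, sgn v w = if w = 0 then (2 : ℂ) ^ m else 0 := by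
  have h := AddChar.sum_eq_ite (sgnChar w)
  simp only [sgnChar_eq_zero_iff, Fintype.card_pi, ZMod.card, Finset.prod_const, Finset.card_univ,
    Fintype.card_fin, Nat.cast_pow, Nat.cast_ofNat] at h
  exact h

theorem sum_sgn_submodule (S : Submodule (ZMod 2) (Vec m)) (w : Vec m) :
    ∑ s : S, sgn (s : Vec m) w = if w ∈ perp (S : Set (Vec m)) then (Nat.card S : ℂ) else 0 := by
  have h := AddChar.sum_eq_ite ((sgnChar w).compAddMonoidHom S.toAddSubgroup.subtype)
  simp only [sgnChar_comp_subtype_eq_zero_iff] at h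
  rw [Nat.card_eq_fintype_card]
  exact h

theorem mul_Xop_apply {n : Type*} (M : Matrix n (Vec m) ℂ) (x : Vec m) (a : n) (b : Vec m) :
    (M * Xop x) a b = M a (b + x) := by
  simp [Matrix.mul_apply, Xop]

theorem Xop_mul_apply {n : Type*} (M : Matrix (Vec m) n ℂ) (x a : Vec m) (b : n) :
    (Xop x * M) a b = M (a + x) b := by
  simp [Matrix.mul_apply, Xop, eq_add_iff_add_eq]

theorem conjTranspose_Xop (x : Vec m) : (Xop x)ᴴ = Xop x := by
  ext a b
  simp only [Xop, Matrix.conjTranspose_apply, Matrix.of_apply, apply_ite star, star_one, star_zero,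
    eq_add_iff_add_eq b, eq_comm (a := b + x)]

theorem conjTranspose_Zop (z : Vec m) : (Zop z)ᴴ = Zop z := by
  rw [Zop, Matrix.diagonal_conjTranspose]
  exact congrArg Matrix.diagonal (funext fun v => star_sgn z v)

theorem proj_eq_diagonal (A : Set (Vec m)) :
    proj A = Matrix.diagonal fun v => if v ∈ A then 1 else 0 := by
  ext a b
  simp only [proj, Matrix.of_apply, Matrix.diagonal_apply, ite_and]

theorem commute_Zop_proj (z : Vec m) (A : Set (Vec m)) : Commute (Zop z) (proj A) := by
  rw [proj_eq_diagonal]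
  exact Matrix.commute_diagonal _ _

theorem proj_union {A B : Set (Vec m)} (h : Disjoint A B) : proj (A ∪ B) = proj A + proj B := by
  rw [proj_eq_diagonal, proj_eq_diagonal, proj_eq_diagonal, Matrix.diagonal_add]
  refine congrArg Matrix.diagonal (funext fun v => ?_)
  have hv : v ∈ A → v ∉ B := fun hA hB => Set.disjoint_left.mp h hA hB
  by_cases hA : v ∈ A <;> simp_all

theorem Xop_mul_proj_mul_Xop (x : Vec m) (A : Set (Vec m)) :
    Xop x * proj A * Xop x = proj ((· + x) '' A) := by
  ext a b
  simp only [mul_Xop_apply, Xop_mul_apply, proj, Matrix.of_apply, mem_image_add_right_iff,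
    add_left_inj]

theorem Zop_mul_Had (z : Vec m) : Zop z * Had m = Had m * Xop z := by
  ext a b
  simp only [Zop, Matrix.diagonal_mul, mul_Xop_apply, Had, Matrix.of_apply, sgn_add_left]
  ring

theorem Had_mul_Zop (z : Vec m) : Had m * Zop z = Xop z * Had m := by
  ext a b
  simp only [Zop, Matrix.mul_diagonal, Xop_mul_apply, Had, Matrix.of_apply, sgn_add_right,
    sgn_comm z b]
  ring

theorem ofReal_inv_sqrt_mul_self {r : ℝ} (hr : 0 ≤ r) :
    ((√r)⁻¹ : ℝ) * ((√r)⁻¹ : ℝ) = (r : ℂ)⁻¹ := by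
  rw [← Complex.ofReal_mul, ← mul_inv, Real.mul_self_sqrt hr, Complex.ofReal_inv]

theorem Had_mul_Had : Had m * Had m = 1 := by
  ext a b
  have hterm (v : Vec m) : Had m a v * Had m v b = ((2 : ℂ) ^ m)⁻¹ * sgn v (a + b) := by
    have hroot := ofReal_inv_sqrt_mul_self (r := 2 ^ m) (by positivity)
    push_cast at hroot
    simp only [Had, Matrix.of_apply, sgn_add_right, sgn_comm b v, Complex.ofReal_inv, ← hroot]
    ring
  simp only [Matrix.mul_apply, hterm, ← Finset.mul_sum, sum_sgn, add_eq_zero_iff_eq,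
    Matrix.one_apply]
  split_ifs <;> simp

theorem commute_Xop_Had_mul_proj_mul_Had (x : Vec m) (A : Set (Vec m)) :
    Commute (Xop x) (Had m * proj A * Had m) := by
  change Xop x * (Had m * proj A * Had m) = Had m * proj A * Had m * Xop x
  calc
    _ = Had m * (Zop x * proj A) * Had m := by
      simp only [← Matrix.mul_assoc, Had_mul_Zop]
    _ = Had m * (proj A * Zop x) * Had m := by
      rw [(commute_Zop_proj x A).eq]
    _ = Had m * proj A * Had m * Xop x := by
      simp only [Matrix.mul_assoc, Zop_mul_Had]

theorem commute_Xop_Had_mul_Xop_mul_proj_mul_Xop_mul_Had (x z : Vec m) (A : Set (Vec m)) :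
    Commute (Xop x) (Had m * Xop z * proj A * Xop z * Had m) := by
  have h := commute_Xop_Had_mul_proj_mul_Had x ((· + z) '' A)
  rw [← Xop_mul_proj_mul_Xop] at h
  simpa only [Matrix.mul_assoc] using h

/-- The projector `|S|⁻¹ ∑_{s ∈ S} X^s` onto the vectors invariant under translation by `S`, i.e.
onto the span of the coset states of `S`. -/
noncomputable def cosetProj (S : Submodule (ZMod 2) (Vec m)) : Matrix (Vec m) (Vec m) ℂ :=
  (Nat.card S : ℂ)⁻¹ • ∑ s : S, Xop (s : Vec m)

theorem cosetProj_apply (S : Submodule (ZMod 2) (Vec m)) (a b : Vec m) :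
    cosetProj S a b = if a + b ∈ S then (Nat.card S : ℂ)⁻¹ else 0 := by
  have hs (s : S) : Xop (s : Vec m) a b = if (s : Vec m) = a + b then 1 else 0 := by
    rw [Xop, Matrix.of_apply]
    exact if_congr (by rw [eq_add_iff_add_eq (s : Vec m), add_comm b, eq_comm]) rfl rfl
  simp only [cosetProj, Matrix.smul_apply, Matrix.sum_apply, hs, smul_eq_mul]
  split_ifs with h
  · rw [Fintype.sum_eq_single ⟨a + b, h⟩ fun s hne => if_neg fun heq => hne (Subtype.ext heq),
      if_pos rfl, mul_one]
  · rw [Fintype.sum_eq_zero _ fun s => if_neg fun heq => h (by rw [← heq]; exact s.2), mul_zero]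

theorem proj_perp (S : Submodule (ZMod 2) (Vec m)) :
    proj (perp (S : Set (Vec m))) = (Nat.card S : ℂ)⁻¹ • ∑ s : S, Zop (s : Vec m) := by
  ext a b
  simp only [proj_eq_diagonal, Zop, Matrix.smul_apply, Matrix.sum_apply, Matrix.diagonal_apply]
  split_ifs with hab ha
  · simp [sum_sgn_submodule, ha]
  · simp [sum_sgn_submodule, ha]
  · simp

theorem Had_mul_proj_perp_mul_Had (S : Submodule (ZMod 2) (Vec m)) :
    Had m * proj (perp (S : Set (Vec m))) * Had m = cosetProj S := by
  simp only [proj_perp, cosetProj, Matrix.mul_smul, Matrix.smul_mul, Matrix.mul_sum,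
    Matrix.sum_mul, Had_mul_Zop, Matrix.mul_assoc, Had_mul_Had, Matrix.mul_one]

theorem Zop_mul_cosetProj_mul_Zop (S : Submodule (ZMod 2) (Vec m)) (z : Vec m) :
    Zop z * cosetProj S * Zop z =
      Had m * Xop z * proj (perp (S : Set (Vec m))) * Xop z * Had m :=
  calc
    _ = Zop z * Had m * proj (perp (S : Set (Vec m))) * (Had m * Zop z) := by
      simp only [← Had_mul_proj_perp_mul_Had, Matrix.mul_assoc]
    _ = Had m * Xop z * proj (perp (S : Set (Vec m))) * (Xop z * Had m) := by
      rw [Zop_mul_Had, Had_mul_Zop]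
    _ = Had m * Xop z * proj (perp (S : Set (Vec m))) * Xop z * Had m := by
      rw [← Matrix.mul_assoc]

theorem outer_cosetState (S : Submodule (ZMod 2) (Vec m)) (t : Vec m) :
    outer (cosetState (S : Set (Vec m)) t) =
      cosetProj S * proj ((· + t) '' (S : Set (Vec m))) := by
  ext a b
  have hroot := ofReal_inv_sqrt_mul_self (Nat.cast_nonneg (Nat.card S))
  have hmem (hb : b + t ∈ S) : a + b ∈ S ↔ a + t ∈ S := by
    rw [← S.add_mem_iff_left hb, add_assoc, ← add_assoc b b, ZModModule.add_self, zero_add]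
  rw [proj_eq_diagonal, Matrix.mul_diagonal, cosetProj_apply]
  simp only [outer, cosetState, Matrix.of_apply, mem_image_add_right_iff, SetLike.mem_coe]
  by_cases hb : b + t ∈ S
  · by_cases ha : a + t ∈ S
    · simpa [ha, hb, hmem hb] using hroot
    · simp [ha, hmem hb]
  · simp [hb]

theorem outer_cosetState_zero_add_outer_cosetState {S : Submodule (ZMod 2) (Vec m)} {Δ : Vec m}
    (hΔ : Δ ∉ S) :
    outer (cosetState (S : Set (Vec m)) 0) + outer (cosetState (S : Set (Vec m)) Δ) =
      cosetProj S * proj (SDelta S Δ) := by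
  have hdisj : Disjoint (S : Set (Vec m)) ((· + Δ) '' (S : Set (Vec m))) :=
    Set.disjoint_left.mpr fun v hv hvΔ =>
      hΔ ((S.add_mem_iff_right hv).mp ((mem_image_add_right_iff _ v Δ).mp hvΔ))
  rw [outer_cosetState, outer_cosetState, SDelta, proj_union hdisj, Matrix.mul_add]
  simp

end

/-- **Codespace projector identity for coset-state authentication.** For a subspace
`S ⊆ 𝔽₂^m`, `Δ ∉ S`, and one-time pad keys `x, z`, with `U = X^x Z^z`, the orthogonal
projector onto the span of the two encoded coset states `U|S⟩` and `U|S+Δ⟩` equals the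
composition of the standard-basis codespace check followed by the Hadamard-basis codespace
check:
`U|S⟩⟨S|U† + U|S+Δ⟩⟨S+Δ|U† = H^{⊗m} X^z Π[S^⊥] X^z H^{⊗m} X^x Π[S_Δ] X^x`. -/
theorem csa_codespace_projector {m : ℕ} (hm : 1 ≤ m)
    (S : Submodule (ZMod 2) (Vec m)) (Δ : Vec m) (hΔ : Δ ∉ S) (x z : Vec m) :
    (Xop x * Zop z) * outer (cosetState (S : Set (Vec m)) 0) * (Xop x * Zop z)ᴴ
      + (Xop x * Zop z) * outer (cosetState (S : Set (Vec m)) Δ) * (Xop x * Zop z)ᴴ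
    = Had m * Xop z * proj (perp (S : Set (Vec m))) * Xop z * Had m
        * Xop x * proj (SDelta S Δ) * Xop x := by
  calc
    _ = Xop x * Zop z * (cosetProj S * proj (SDelta S Δ)) * (Zop z * Xop x) := by
      rw [← Matrix.add_mul, ← Matrix.mul_add, outer_cosetState_zero_add_outer_cosetState hΔ,
        Matrix.conjTranspose_mul, conjTranspose_Xop, conjTranspose_Zop]
    _ = Xop x * (Zop z * cosetProj S) * (proj (SDelta S Δ) * Zop z) * Xop x := by
      simp only [Matrix.mul_assoc]
    _ = Xop x * (Zop z * cosetProj S * Zop z) * proj (SDelta S Δ) * Xop x := by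
      rw [← (commute_Zop_proj z _).eq]
      simp only [Matrix.mul_assoc]
    _ = _ := by
      rw [Zop_mul_cosetProj_mul_Zop, (commute_Xop_Had_mul_Xop_mul_proj_mul_Xop_mul_Had x z _).eq]
end

section
/- Let $\lambda \ge 1$ be a natural number and let $\mathcal{G} \subseteq \{1,\dots,\lambda\}$. Let $\mathsf{chal}$ be uniformly distributed in $\{0,1\}^{\lambda}$ and set $\mathrm{Open}(\mathsf{chal}) := \{t : \mathsf{chal}_t = 1\}$. Then $\Pr\big[\, \mathrm{Open}(\mathsf{chal}) \subseteq \mathcal{G} \;\text{and}\; |\mathrm{Open}(\mathsf{chal})| \ge 2|\mathcal{G}| - \lambda \,\big] \;\le\; 2^{-\lambda/8} + e^{-\lambda/8}.$ -/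
open scoped Classical

/-!
If `|G| ≤ (1 - ε) λ`, then already `Open(chal) ⊆ G` has probability only
`2 ^ (|G| - λ) ≤ 2 ^ (-ε λ)`. Otherwise `2|G| - λ` exceeds the mean `λ / 2` of `|Open(chal)|`
by at least `(1/2 - 2ε) λ`, and Hoeffding's inequality applies. Taking `ε = 1/8` makes
both exponents `λ / 8`.
-/

section UniformSubset

open Finset

variable {ι : Type*} [Fintype ι]

theorem card_filter_support_eq_card_filter_finset [DecidableEq ι]
    (p : Finset ι → Prop) [DecidablePred p] :
    #{c : ι → Bool | p ({t | c t} : Finset ι)} = #{S : Finset ι | p S} :=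
  card_nbij' (fun c => ({t | c t} : Finset ι)) (fun S t => decide (t ∈ S))
    (fun c hc => by simpa using hc) (fun S hS => by simpa using hS)
    (fun c _ => by simp) (fun S _ => by simp)

theorem sum_exp_mul_two_mul_card_sub_eq_cosh_pow (s : ℝ) :
    ∑ S : Finset ι, Real.exp (s * (2 * #S - Fintype.card ι)) =
      (2 * Real.cosh s) ^ Fintype.card ι := by
  have exp_eq (S : Finset ι) : Real.exp (s * (2 * #S - Fintype.card ι)) =
      Real.exp s ^ #S * Real.exp (-s) ^ (Fintype.card ι - #S) := by
    rw [← Real.exp_nat_mul, ← Real.exp_nat_mul, ← Real.exp_add, Nat.cast_sub S.card_le_univ]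
    ring_nf
  simp only [exp_eq, Fintype.sum_pow_mul_eq_add_pow, Real.cosh_eq,
    mul_div_cancel₀ _ (two_ne_zero' ℝ)]

theorem hoeffding_card_uniform_finset {δ : ℝ} (hδ : 0 ≤ δ) :
    (#{S : Finset ι | (1 / 2 + δ) * Fintype.card ι ≤ #S} : ℝ) ≤
      2 ^ Fintype.card ι * Real.exp (-2 * δ ^ 2 * Fintype.card ι) := by
  set n := Fintype.card ι
  -- Chernoff's method; the parameter `s = 2 δ` minimizes `s ^ 2 / 2 - 2 δ s`.
  have exp_le_of_mem : ∀ S ∈ ({S : Finset ι | (1 / 2 + δ) * n ≤ #S} : Finset (Finset ι)),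
      Real.exp (4 * δ ^ 2 * n) ≤ Real.exp (2 * δ * (2 * #S - n)) := fun S hS => by
    have deviation : 2 * δ * n ≤ 2 * #S - n := by linarith [(mem_filter.mp hS).2]
    calc Real.exp (4 * δ ^ 2 * n) = Real.exp (2 * δ * (2 * δ * n)) := by ring_nf
      _ ≤ Real.exp (2 * δ * (2 * #S - n)) := by gcongr
  have markov : #{S : Finset ι | (1 / 2 + δ) * n ≤ #S} * Real.exp (4 * δ ^ 2 * n) ≤
      ∑ S : Finset ι, Real.exp (2 * δ * (2 * #S - n)) := by
    rw [← nsmul_eq_mul]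
    exact (card_nsmul_le_sum _ _ _ exp_le_of_mem).trans
      (sum_le_sum_of_subset_of_nonneg (subset_univ _) fun _ _ _ => Real.exp_nonneg _)
  refine le_of_mul_le_mul_right (markov.trans ?_) (Real.exp_pos (4 * δ ^ 2 * n))
  calc ∑ S : Finset ι, Real.exp (2 * δ * (2 * #S - n))
      = 2 ^ n * Real.cosh (2 * δ) ^ n := by
        rw [sum_exp_mul_two_mul_card_sub_eq_cosh_pow, mul_pow]
    _ ≤ 2 ^ n * Real.exp ((2 * δ) ^ 2 / 2) ^ n := by
        gcongr
        exact Real.cosh_le_exp_half_sq _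
    _ = 2 ^ n * Real.exp (-2 * δ ^ 2 * n) * Real.exp (4 * δ ^ 2 * n) := by
        rw [mul_assoc, ← Real.exp_nat_mul, ← Real.exp_add]
        ring_nf

theorem cut_and_choose_bound_general [DecidableEq ι] (G : Finset ι) {ε : ℝ} (hε : ε ≤ 1 / 4) :
    (#{chal : ι → Bool | ({t | chal t} : Finset ι) ⊆ G ∧
        2 * (#G : ℤ) - Fintype.card ι ≤ #{t | chal t}} : ℝ) / 2 ^ Fintype.card ι ≤
      max ((2 : ℝ) ^ (-ε * Fintype.card ι))
        (Real.exp (-2 * (1 / 2 - 2 * ε) ^ 2 * Fintype.card ι)) := by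
  set n := Fintype.card ι
  rw [card_filter_support_eq_card_filter_finset (fun S => S ⊆ G ∧ 2 * (#G : ℤ) - n ≤ #S)]
  rcases le_total (#G : ℝ) ((1 - ε) * n) with card_G_le | le_card_G
  · refine le_max_of_le_left ((div_le_iff₀' (by positivity)).mpr ?_)
    calc (#{S : Finset ι | S ⊆ G ∧ 2 * (#G : ℤ) - n ≤ #S} : ℝ)
        ≤ #{S : Finset ι | S ⊆ G} := by
          gcongr with S
          exact And.left
      _ = (2 : ℝ) ^ (#G : ℝ) := by
        rw [filter_subset_univ, card_powerset, Nat.cast_pow, Nat.cast_ofNat, Real.rpow_natCast]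
      _ ≤ 2 ^ (n + -ε * n) := Real.rpow_le_rpow_of_exponent_le one_le_two (by linarith)
      _ = 2 ^ n * (2 : ℝ) ^ (-ε * n) := by rw [Real.rpow_add two_pos, Real.rpow_natCast]
  · refine le_max_of_le_right ((div_le_iff₀' (by positivity)).mpr ?_)
    calc (#{S : Finset ι | S ⊆ G ∧ 2 * (#G : ℤ) - n ≤ #S} : ℝ)
        ≤ #{S : Finset ι | (1 / 2 + (1 / 2 - 2 * ε)) * n ≤ #S} := by
          gcongr with S
          rintro ⟨-, card_ge⟩
          have card_ge_real : 2 * (#G : ℝ) - n ≤ #S := mod_cast card_ge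
          linarith
      _ ≤ 2 ^ n * Real.exp (-2 * (1 / 2 - 2 * ε) ^ 2 * n) :=
        hoeffding_card_uniform_finset (by linarith)

end UniformSubset

/-- **Cut-and-choose combinatorial core.** Let `chal` be uniform in `{0,1}^λ` and let
`Open(chal) = {t : chal t = 1}`. For any `G ⊆ {1,…,λ}`,
`Pr[Open(chal) ⊆ G ∧ |Open(chal)| ≥ 2|G| - λ] ≤ 2^{-λ/8} + e^{-λ/8}`,
where the probability is the counting fraction over all `2^λ` challenges and the
inequality `|Open(chal)| ≥ 2|G| - λ` is over the integers. -/
theorem cut_and_choose_bound (lam : ℕ) (hlam : 1 ≤ lam) (G : Finset (Fin lam)) :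
    ((Finset.univ.filter fun chal : Fin lam → Bool =>
        (Finset.univ.filter fun t => chal t) ⊆ G ∧
        2 * (G.card : ℤ) - (lam : ℤ)
          ≤ ((Finset.univ.filter fun t => chal t).card : ℤ)).card : ℝ)
      / 2 ^ lam
    ≤ (2 : ℝ) ^ (-(lam : ℝ) / 8) + Real.exp (-(lam : ℝ) / 8) := by
  have bound := cut_and_choose_bound_general G (ε := 1 / 8) (by norm_num)
  rw [Fintype.card_fin, show -(1 / 8 : ℝ) * lam = -lam / 8 by ring,
    show -2 * (1 / 2 - 2 * (1 / 8) : ℝ) ^ 2 * lam = -lam / 8 by ring] at bound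
  exact bound.trans (max_le_add_of_nonneg (by positivity) (Real.exp_nonneg _))
end

section
/- Let $\mathcal{H}$ be a finite-dimensional complex Hilbert space, $K$ a nonempty finite set, and $N \ge 1$ an integer. For each $k \in K$ let $\psi_k \in \mathcal{H}$ be a unit vector and let $\Pi_{k,1},\dots,\Pi_{k,N}$ be orthogonal projections on $\mathcal{H}$ with $\Pi_{k,i}\Pi_{k,j} = 0$ for all $i \ne j$ and $(\sum_{i=1}^N \Pi_{k,i})\psi_k = \psi_k$. Then for every orthogonal projection $D$ on $\mathcal{H}$, $\mathbb{E}_{k \leftarrow K}\big[\|D\psi_k\|^2\big] - \sum_{i=1}^{N} \mathbb{E}_{k \leftarrow K}\big[\|D\,\Pi_{k,i}\,\psi_k\|^2\big] \;\le\; N \cdot \sqrt{\textstyle\sum_{i \ne j} \mathbb{E}_{k \leftarrow K}\big[\|\Pi_{k,j}\, D\, \Pi_{k,i}\, \psi_k\|^2\big]}.$ -/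
/-!
Put `x i = P i ψ`. Then `‖D ψ‖² - ∑ᵢ ‖D (x i)‖²` is the sum of the cross terms
`re ⟪D (x j), D (x i)⟫` over `i ≠ j`. As `D` and `P j` are symmetric and idempotent, each of them is
`re ⟪x j, P j (D (x i))⟫`, and Cauchy–Schwarz over the pairs `i ≠ j` bounds their sum by
`√(∑_{i ≠ j} ‖x j‖²) √(∑_{i ≠ j} ‖P j (D (x i))‖²)`. The first factor is `√(N - 1) ‖ψ‖`, because
`∑ⱼ ‖P j ψ‖² = re ⟪ψ, ∑ⱼ P j ψ⟫ = ‖ψ‖²`. By concavity of the square root the bound survives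
averaging over `k`, and `√(N - 1) ≤ N`.
-/

open scoped InnerProductSpace
open RCLike Finset

section OffDiagonal

variable {ι : Type*} [Fintype ι] [DecidableEq ι]

theorem sum_filter_ne_eq_sum_sub_sum_diag {M : Type*} [AddCommGroup M] (f : ι × ι → M) :
    ∑ p with p.1 ≠ p.2, f p = ∑ i, ∑ j, f (i, j) - ∑ i, f (i, i) := by
  have hdiag : ∑ p with ¬ p.1 ≠ p.2, f p = ∑ i, f (i, i) := by
    simp only [not_not, sum_filter, Fintype.sum_prod_type, sum_ite_eq, mem_univ, if_true]
  rw [← Fintype.sum_prod_type, ← hdiag, eq_sub_iff_add_eq, sum_filter_add_sum_filter_not]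

theorem sum_filter_ne_snd {R : Type*} [NonAssocRing R] (f : ι → R) :
    ∑ p : ι × ι with p.1 ≠ p.2, f p.2 = (Fintype.card ι - 1) * ∑ j, f j := by
  simp [sum_filter_ne_eq_sum_sub_sum_diag, sub_mul]

theorem norm_sum_sq_sub_sum_norm_sq (𝕜 : Type*) {E : Type*} [RCLike 𝕜]
    [SeminormedAddCommGroup E] [InnerProductSpace 𝕜 E] (x : ι → E) :
    ‖∑ i, x i‖ ^ 2 - ∑ i, ‖x i‖ ^ 2 = ∑ p : ι × ι with p.1 ≠ p.2, re ⟪x p.2, x p.1⟫_𝕜 := by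
  simp only [sum_filter_ne_eq_sum_sub_sum_diag, ← inner_self_eq_norm_sq (𝕜 := 𝕜), sum_inner,
    inner_sum, map_sum]

end OffDiagonal

theorem sum_mul_sqrt_le_sqrt_sum_mul {K : Type*} [Fintype K] {w : K → ℝ}
    (hw : w ∈ stdSimplex ℝ K) {x : K → ℝ} (hx : ∀ k, 0 ≤ x k) :
    ∑ k, w k * √(x k) ≤ √(∑ k, w k * x k) :=
  Real.strictConcaveOn_sqrt.concaveOn.le_map_sum (fun k _ => hw.1 k) hw.2 fun k _ => hx k

theorem sum_barycenter_mul {K 𝕜 : Type*} [Fintype K] [Nonempty K] [Field 𝕜] [LinearOrder 𝕜]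
    [IsStrictOrderedRing 𝕜] (x : K → 𝕜) :
    ∑ k, (stdSimplex.barycenter : stdSimplex 𝕜 K).val k * x k = (∑ k, x k) / Fintype.card K := by
  simp only [stdSimplex.barycenter_apply, inv_mul_eq_div, sum_div]

theorem sqrt_natCast_sub_one_le (n : ℕ) : √(n - 1 : ℝ) ≤ n :=
  Real.sqrt_le_iff.2 ⟨n.cast_nonneg, by nlinarith [sq_nonneg ((n : ℝ) - 1)]⟩

section SymmetricProjection

variable {𝕜 E : Type*} [RCLike 𝕜] [SeminormedAddCommGroup E] [InnerProductSpace 𝕜 E]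

theorem isSymmetricProjection_of_isSelfAdjoint {H : Type*} [NormedAddCommGroup H]
    [InnerProductSpace 𝕜 H] [CompleteSpace H] {T : H →L[𝕜] H} (hsa : IsSelfAdjoint T)
    (hidem : T * T = T) : (T : H →ₗ[𝕜] H).IsSymmetricProjection :=
  ContinuousLinearMap.isStarProjection_iff_isSymmetricProjection.1 ⟨hidem, hsa⟩

theorem inner_map_map_of_isSymmetricProjection {T : E →ₗ[𝕜] E} (hT : T.IsSymmetricProjection)
    (x y : E) : ⟪T x, T y⟫_𝕜 = ⟪x, T y⟫_𝕜 := by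
  rw [hT.isSymmetric, ← Module.End.mul_apply, hT.isIdempotentElem.eq]

variable {ι : Type*} [Fintype ι] {P : ι → E →ₗ[𝕜] E} {ψ : E}

theorem sum_norm_sq_eq_norm_sq_of_sum_eq_self (hP : ∀ i, (P i).IsSymmetricProjection)
    (hψ : ∑ i, P i ψ = ψ) : ∑ i, ‖P i ψ‖ ^ 2 = ‖ψ‖ ^ 2 := by
  calc ∑ i, ‖P i ψ‖ ^ 2 = ∑ i, re ⟪ψ, P i ψ⟫_𝕜 := by
        simp only [← inner_self_eq_norm_sq (𝕜 := 𝕜), inner_map_map_of_isSymmetricProjection (hP _)]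
    _ = ‖ψ‖ ^ 2 := by rw [← map_sum, ← inner_sum, hψ, inner_self_eq_norm_sq]

variable [DecidableEq ι] {D : E →ₗ[𝕜] E}

theorem norm_map_sq_sub_sum_norm_map_sq_eq (hP : ∀ i, (P i).IsSymmetricProjection)
    (hψ : ∑ i, P i ψ = ψ) (hD : D.IsSymmetricProjection) :
    ‖D ψ‖ ^ 2 - ∑ i, ‖D (P i ψ)‖ ^ 2 =
      ∑ p : ι × ι with p.1 ≠ p.2, re ⟪P p.2 ψ, P p.2 (D (P p.1 ψ))⟫_𝕜 := by
  have hDψ : D ψ = ∑ i, D (P i ψ) := by rw [← map_sum, hψ]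
  have hcross (i j : ι) : ⟪D (P j ψ), D (P i ψ)⟫_𝕜 = ⟪P j ψ, P j (D (P i ψ))⟫_𝕜 := by
    rw [inner_map_map_of_isSymmetricProjection hD, inner_map_map_of_isSymmetricProjection (hP j),
      (hP j).isSymmetric]
  simp only [hDψ, norm_sum_sq_sub_sum_norm_sq 𝕜, hcross]

theorem norm_map_sq_sub_sum_norm_map_sq_le (hP : ∀ i, (P i).IsSymmetricProjection)
    (hψ : ∑ i, P i ψ = ψ) (hD : D.IsSymmetricProjection) :
    ‖D ψ‖ ^ 2 - ∑ i, ‖D (P i ψ)‖ ^ 2 ≤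
      √(Fintype.card ι - 1) * ‖ψ‖ *
        √(∑ p : ι × ι with p.1 ≠ p.2, ‖P p.2 (D (P p.1 ψ))‖ ^ 2) := by
  calc ‖D ψ‖ ^ 2 - ∑ i, ‖D (P i ψ)‖ ^ 2
      = ∑ p : ι × ι with p.1 ≠ p.2, re ⟪P p.2 ψ, P p.2 (D (P p.1 ψ))⟫_𝕜 :=
        norm_map_sq_sub_sum_norm_map_sq_eq hP hψ hD
    _ ≤ ∑ p : ι × ι with p.1 ≠ p.2, ‖P p.2 ψ‖ * ‖P p.2 (D (P p.1 ψ))‖ :=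
        sum_le_sum fun _ _ => re_inner_le_norm _ _
    _ ≤ √(∑ p : ι × ι with p.1 ≠ p.2, ‖P p.2 ψ‖ ^ 2) *
          √(∑ p : ι × ι with p.1 ≠ p.2, ‖P p.2 (D (P p.1 ψ))‖ ^ 2) :=
        Real.sum_mul_le_sqrt_mul_sqrt _ _ _
    _ = √(Fintype.card ι - 1) * ‖ψ‖ *
          √(∑ p : ι × ι with p.1 ≠ p.2, ‖P p.2 (D (P p.1 ψ))‖ ^ 2) := by
        rw [sum_filter_ne_snd fun j => ‖P j ψ‖ ^ 2, sum_norm_sq_eq_norm_sq_of_sum_eq_self hP hψ,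
          Real.sqrt_mul' _ (sq_nonneg _), Real.sqrt_sq (norm_nonneg _)]

theorem state_decomposition_general {K : Type*} [Fintype K] {w : K → ℝ}
    (hw : w ∈ stdSimplex ℝ K) {ψ : K → E} (hψ : ∀ k, ‖ψ k‖ = 1) {P : K → ι → E →ₗ[𝕜] E}
    (hP : ∀ k i, (P k i).IsSymmetricProjection) (hsum : ∀ k, ∑ i, P k i (ψ k) = ψ k)
    (hD : D.IsSymmetricProjection) :
    ∑ k, w k * ‖D (ψ k)‖ ^ 2 - ∑ i, ∑ k, w k * ‖D (P k i (ψ k))‖ ^ 2 ≤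
      √(Fintype.card ι - 1) *
        √(∑ p : ι × ι with p.1 ≠ p.2, ∑ k, w k * ‖P k p.2 (D (P k p.1 (ψ k)))‖ ^ 2) := by
  let moved (k : K) : ℝ := ∑ p : ι × ι with p.1 ≠ p.2, ‖P k p.2 (D (P k p.1 (ψ k)))‖ ^ 2
  have hstate (k : K) : ‖D (ψ k)‖ ^ 2 - ∑ i, ‖D (P k i (ψ k))‖ ^ 2 ≤
      √(Fintype.card ι - 1) * √(moved k) := by
    simpa only [hψ k, mul_one] using norm_map_sq_sub_sum_norm_map_sq_le (hP k) (hsum k) hD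
  calc ∑ k, w k * ‖D (ψ k)‖ ^ 2 - ∑ i, ∑ k, w k * ‖D (P k i (ψ k))‖ ^ 2
      = ∑ k, w k * (‖D (ψ k)‖ ^ 2 - ∑ i, ‖D (P k i (ψ k))‖ ^ 2) := by
        rw [sum_comm]
        simp only [mul_sub, mul_sum, sum_sub_distrib]
    _ ≤ ∑ k, w k * (√(Fintype.card ι - 1) * √(moved k)) :=
        sum_le_sum fun k _ => mul_le_mul_of_nonneg_left (hstate k) (hw.1 k)
    _ = √(Fintype.card ι - 1) * ∑ k, w k * √(moved k) := by
        simp only [mul_sum, mul_left_comm]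
    _ ≤ √(Fintype.card ι - 1) * √(∑ k, w k * moved k) := by
        gcongr
        exact sum_mul_sqrt_le_sqrt_sum_mul hw fun _ => sum_nonneg fun _ _ => sq_nonneg _
    _ = √(Fintype.card ι - 1) *
          √(∑ p : ι × ι with p.1 ≠ p.2, ∑ k, w k * ‖P k p.2 (D (P k p.1 (ψ k)))‖ ^ 2) := by
        rw [sum_comm]
        simp only [moved, mul_sum]

end SymmetricProjection

/-- **State decomposition lemma.** Let `ψ k` be unit vectors in a finite-dimensional complex
Hilbert space, and for each `k` let `P k 1, …, P k N` be mutually orthogonal projections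
whose sum fixes `ψ k`. Then for every orthogonal projection `D`,
`𝔼_k ‖D ψ_k‖² - ∑ᵢ 𝔼_k ‖D Π_{k,i} ψ_k‖² ≤ N √(∑_{i≠j} 𝔼_k ‖Π_{k,j} D Π_{k,i} ψ_k‖²)`,
where `𝔼_k` averages over a uniformly random `k`. -/
theorem state_decomposition
    {H : Type*} [NormedAddCommGroup H] [InnerProductSpace ℂ H] [FiniteDimensional ℂ H]
    {K : Type*} [Fintype K] [Nonempty K]
    (N : ℕ) (hN : 1 ≤ N)
    (ψ : K → H) (hψ : ∀ k, ‖ψ k‖ = 1)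
    (P : K → Fin N → H →L[ℂ] H)
    (hsa : ∀ k i, IsSelfAdjoint (P k i))
    (hidem : ∀ k i, P k i * P k i = P k i)
    (horth : ∀ k i j, i ≠ j → P k i * P k j = 0)
    (hsum : ∀ k, (∑ i, P k i) (ψ k) = ψ k)
    (D : H →L[ℂ] H) (hDsa : IsSelfAdjoint D) (hDidem : D * D = D) :
    (∑ k, ‖D (ψ k)‖ ^ 2) / (Fintype.card K : ℝ)
      - ∑ i, (∑ k, ‖D (P k i (ψ k))‖ ^ 2) / (Fintype.card K : ℝ)
    ≤ (N : ℝ) * Real.sqrt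
        (∑ p ∈ (Finset.univ : Finset (Fin N × Fin N)).filter (fun p => p.1 ≠ p.2),
          (∑ k, ‖P k p.2 (D (P k p.1 (ψ k)))‖ ^ 2) / (Fintype.card K : ℝ)) := by
  have := FiniteDimensional.complete ℂ H
  refine le_trans ?_ (mul_le_mul_of_nonneg_right (sqrt_natCast_sub_one_le N) (Real.sqrt_nonneg _))
  simpa only [sum_barycenter_mul, Fintype.card_fin, ContinuousLinearMap.coe_coe] using
    state_decomposition_general stdSimplex.barycenter.2 hψ
      (fun k i => isSymmetricProjection_of_isSelfAdjoint (hsa k i) (hidem k i))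
      (fun k => by simpa using hsum k) (isSymmetricProjection_of_isSelfAdjoint hDsa hDidem)
end

section
/- Fix finite sets $X$ (query domain) and a query-answer register $\mathbb{F}_2^{\ell}$, a finite-dimensional workspace $W$, and let $\mathcal{H} := \mathbb{C}^{X} \otimes \mathbb{C}^{\mathbb{F}_2^{\ell}} \otimes W$. For a function $O : X \to \mathbb{F}_2^{\ell}$ let $\bar{O}$ be the unitary on $\mathcal{H}$ with $\bar{O}\,|x, y, w\rangle = |x, y + O(x), w\rangle$, and for $S \subseteq X$ let $\Pi[S]$ be the orthogonal projection onto $\mathrm{span}\{|x,y,w\rangle : x \in S\}$. A $q$-query oracle algorithm is a tuple $(B_0,\dots,B_q)$ of unitaries on $\mathcal{H}$, and for a function $O$ and a unit vector $z \in \mathcal{H}$ its output state is $U^{O}(z) := B_q \bar{O} B_{q-1}\bar{O}\cdots \bar{O} B_0\, z$. Now let $K$ be a nonempty finite set and for each $k \in K$ let $z_k \in \mathcal{H}$ be a unit vector, $O_k^0, O_k^1 : X \to \mathbb{F}_2^{\ell}$ functions, and $S_k \subseteq X$ a set such that $O_k^0(x) = O_k^1(x)$ for all $x \notin S_k$. Suppose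 $\epsilon \ge 0$ is such that for every $q$-query oracle algorithm $(B_0,\dots,B_q)$, $\mathbb{E}_{k \leftarrow K}\big[\|\Pi[S_k]\, U^{O_k^0}(z_k)\|^2\big] \le \epsilon$. Then for every $q$-query oracle algorithm $(B_0,\dots,B_q)$ and every family $(D_k)_{k\in K}$ of self-adjoint operators on $\mathcal{H}$ with $0 \preceq D_k \preceq I$, $\Big| \mathbb{E}_{k \leftarrow K}\big[\langle U^{O_k^0}(z_k),\ D_k\, U^{O_k^0}(z_k)\rangle\big] - \mathbb{E}_{k \leftarrow K}\big[\langle U^{O_k^1}(z_k),\ D_k\, U^{O_k^1}(z_k)\rangle\big] \Big| \le 4 q \sqrt{\epsilon}.$ -/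
open scoped Classical ComplexOrder

noncomputable section

/-- The oracle unitary `Ō |x, y, w⟩ = |x, y + O(x), w⟩`, as a matrix on the Hilbert space
with basis `X × 𝔽₂^ℓ × W` (query register, answer register, workspace). -/
def oracleMat {X W : Type*} {ℓ : ℕ} [DecidableEq X] [DecidableEq W]
    (O : X → Fin ℓ → ZMod 2) :
    Matrix (X × (Fin ℓ → ZMod 2) × W) (X × (Fin ℓ → ZMod 2) × W) ℂ :=
  Matrix.of fun a b => if a = (b.1, b.2.1 + O b.1, b.2.2) then 1 else 0

/-- The projection `Π[S]` onto the span of basis states whose query register lies in `S`. -/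
def projMat {X W : Type*} (ℓ : ℕ) (S : Set X) :
    Matrix (X × (Fin ℓ → ZMod 2) × W) (X × (Fin ℓ → ZMod 2) × W) ℂ :=
  Matrix.of fun a b => if a = b ∧ a.1 ∈ S then 1 else 0

/-- The total unitary `B_q Ō B_{q-1} Ō ⋯ Ō B_0` of a `q`-query oracle algorithm
`(B_0, …, B_q)` run with the oracle `O`. -/
def algMat {X W : Type*} {ℓ : ℕ} [Fintype X] [Fintype W] [DecidableEq X] [DecidableEq W]
    (O : X → Fin ℓ → ZMod 2) :
    (q : ℕ) →
      (Fin (q + 1) → Matrix (X × (Fin ℓ → ZMod 2) × W) (X × (Fin ℓ → ZMod 2) × W) ℂ) →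
      Matrix (X × (Fin ℓ → ZMod 2) × W) (X × (Fin ℓ → ZMod 2) × W) ℂ
  | 0, B => B 0
  | q + 1, B => B (Fin.last (q + 1)) * oracleMat O * algMat O q (fun i => B i.castSucc)

/-!
This is the hybrid argument of Bennett, Bernstein, Brassard and Vazirani. Replacing the oracle
`O₀` by `O₁` one query at a time, each replacement moves the final state by at most twice the
amplitude that the query under `O₀` places on `S`, since the oracles agree off `S` and everything
applied afterwards is a contraction. An acceptance probability moves by at most twice the distance
of the states, and averaging over the keys turns mean amplitudes into the root of mean squared ones.

The hypothesis only speaks of the final state of a `q`-query algorithm. It controls the state at an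
earlier query as well, because an algorithm can be continued with identity operators: the remaining
queries permute basis states without touching the query register, so they preserve the amplitude
on `S`.
-/

open Matrix Finset
open scoped BigOperators InnerProductSpace

theorem expect_le_sqrt_expect_sq {ι : Type*} (s : Finset ι) (f : ι → ℝ) :
    𝔼 i ∈ s, f i ≤ √(𝔼 i ∈ s, f i ^ 2) := by
  refine Real.le_sqrt_of_sq_le ?_
  simp only [expect_eq_sum_div_card]
  exact sum_div_card_sq_le_sum_sq_div_card

theorem norm_sq_toLp {ι : Type*} [Fintype ι] {𝕜 : Type*} [RCLike 𝕜]
    (v : ι → 𝕜) : ‖WithLp.toLp 2 v‖ ^ 2 = ∑ a, ‖v a‖ ^ 2 :=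
  EuclideanSpace.norm_sq_eq _

theorem norm_inner_apply_self_sub_le {𝕜 E : Type*} [RCLike 𝕜] [SeminormedAddCommGroup E]
    [InnerProductSpace 𝕜 E] (T : E →L[𝕜] E) (x y : E) :
    ‖⟪x, T x⟫_𝕜 - ⟪y, T y⟫_𝕜‖ ≤ ‖T‖ * (‖x‖ + ‖y‖) * ‖x - y‖ := by
  have hsplit : ⟪x, T x⟫_𝕜 - ⟪y, T y⟫_𝕜 = ⟪x - y, T x⟫_𝕜 + ⟪y, T (x - y)⟫_𝕜 := by
    rw [map_sub, inner_sub_left, inner_sub_right]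
    ring
  calc ‖⟪x, T x⟫_𝕜 - ⟪y, T y⟫_𝕜‖
      ≤ ‖⟪x - y, T x⟫_𝕜‖ + ‖⟪y, T (x - y)⟫_𝕜‖ := hsplit ▸ norm_add_le _ _
    _ ≤ ‖x - y‖ * (‖T‖ * ‖x‖) + ‖y‖ * (‖T‖ * ‖x - y‖) := by
        gcongr <;> exact (norm_inner_le_norm _ _).trans (by gcongr; exact T.le_opNorm _)
    _ = ‖T‖ * (‖x‖ + ‖y‖) * ‖x - y‖ := by ring

section EuclideanMatrix

variable {ι : Type*} [Fintype ι] [DecidableEq ι]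

theorem permMatrix_mem_unitaryGroup {R : Type*} [CommRing R] [StarRing R] (σ : Equiv.Perm ι) :
    σ.permMatrix R ∈ unitaryGroup ι R := by
  rw [mem_unitaryGroup_iff, star_eq_conjTranspose, conjTranspose_permMatrix, ← permMatrix_mul,
    inv_mul_cancel, permMatrix_one]

theorem toEuclideanCLM_mul_apply {𝕜 : Type*} [RCLike 𝕜] (A B : Matrix ι ι 𝕜)
    (ψ : EuclideanSpace 𝕜 ι) : toEuclideanCLM (𝕜 := 𝕜) (A * B) ψ
      = toEuclideanCLM (𝕜 := 𝕜) A (toEuclideanCLM (𝕜 := 𝕜) B ψ) := by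
  rw [map_mul, mul_apply_eq_comp]

theorem norm_toEuclideanCLM_of_mem_unitaryGroup {𝕜 : Type*} [RCLike 𝕜] {U : Matrix ι ι 𝕜}
    (hU : U ∈ unitaryGroup ι 𝕜) (ψ : EuclideanSpace 𝕜 ι) :
    ‖toEuclideanCLM (𝕜 := 𝕜) U ψ‖ = ‖ψ‖ :=
  ContinuousLinearMap.norm_map_of_mem_unitary (Unitary.map_mem _ hU) ψ

/-- The probability `⟨ψ, D ψ⟩` that the measurement `(D, 1 - D)` accepts the state `ψ`. The real
part only matters when `D` is not self-adjoint. -/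
def acceptProb (D : Matrix ι ι ℂ) (ψ : EuclideanSpace ℂ ι) : ℝ :=
  (⟪ψ, toEuclideanCLM (𝕜 := ℂ) D ψ⟫_ℂ).re

theorem acceptProb_toLp (D : Matrix ι ι ℂ) (v : ι → ℂ) :
    acceptProb D (WithLp.toLp 2 v) = (∑ a, starRingEnd ℂ (v a) * (D *ᵥ v) a).re := by
  simp only [acceptProb, toEuclideanCLM_toLp, PiLp.inner_apply, RCLike.inner_apply']

open scoped Matrix.Norms.L2Operator

theorem norm_toEuclideanCLM_le_of_norm_le_one {𝕜 : Type*} [RCLike 𝕜] {A : Matrix ι ι 𝕜}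
    (hA : ‖A‖ ≤ 1) (ψ : EuclideanSpace 𝕜 ι) : ‖toEuclideanCLM (𝕜 := 𝕜) A ψ‖ ≤ ‖ψ‖ :=
  ContinuousLinearMap.le_of_opNorm_le_of_le _ hA le_rfl |>.trans_eq (one_mul _)

theorem norm_le_one_of_mem_unitaryGroup {𝕜 : Type*} [RCLike 𝕜] {U : Matrix ι ι 𝕜}
    (hU : U ∈ unitaryGroup ι 𝕜) : ‖U‖ ≤ 1 :=
  ContinuousLinearMap.opNorm_le_bound _ zero_le_one fun ψ =>
    (norm_toEuclideanCLM_of_mem_unitaryGroup hU ψ).trans_le (one_mul ‖ψ‖).ge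

open scoped MatrixOrder in
theorem norm_le_one_of_posSemidef {D : Matrix ι ι ℂ} (hD : D.PosSemidef)
    (hD' : (1 - D).PosSemidef) : ‖D‖ ≤ 1 :=
  (CStarAlgebra.norm_le_one_iff_of_nonneg D hD.nonneg).2 (Matrix.le_iff.2 hD')

theorem abs_acceptProb_sub_le {D : Matrix ι ι ℂ} (hD : ‖D‖ ≤ 1) {ψ φ : EuclideanSpace ℂ ι}
    (hψ : ‖ψ‖ ≤ 1) (hφ : ‖φ‖ ≤ 1) : |acceptProb D ψ - acceptProb D φ| ≤ 2 * ‖ψ - φ‖ :=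
  calc |acceptProb D ψ - acceptProb D φ|
      ≤ ‖toEuclideanCLM (𝕜 := ℂ) D‖ * (‖ψ‖ + ‖φ‖) * ‖ψ - φ‖ :=
        (Complex.abs_re_le_norm _).trans (norm_inner_apply_self_sub_le _ ψ φ)
    _ ≤ 1 * (1 + 1) * ‖ψ - φ‖ := by gcongr; exact hD
    _ = 2 * ‖ψ - φ‖ := by ring

end EuclideanMatrix

/-- The labels `(x, y, w)` of the computational basis: query register, answer register,
workspace. -/
abbrev QueryBasis (X W : Type*) (ℓ : ℕ) : Type _ := X × (Fin ℓ → ZMod 2) × W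

section Oracle

variable {X W : Type*} {ℓ : ℕ} [DecidableEq X] [DecidableEq W]

/-- The permutation `(x, y, w) ↦ (x, y + O x, w)` of the computational basis induced by a query. -/
def oraclePerm (O : X → Fin ℓ → ZMod 2) : Equiv.Perm (QueryBasis X W ℓ) :=
  (Equiv.refl X).prodShear fun x => (Equiv.addRight (O x)).prodCongr (Equiv.refl W)

theorem oracleMat_eq_permMatrix (O : X → Fin ℓ → ZMod 2) :
    (oracleMat O : Matrix (QueryBasis X W ℓ) _ ℂ) = (oraclePerm O)⁻¹.permMatrix ℂ := by
  ext a b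
  have hab : a = (b.1, b.2.1 + O b.1, b.2.2) ↔ (oraclePerm O)⁻¹ a = b :=
    (Equiv.Perm.inv_eq_iff_eq (f := oraclePerm O)).symm
  simp [oracleMat, hab, PEquiv.toMatrix_apply]

theorem projMat_eq_diagonal (S : Set X) :
    (projMat ℓ S : Matrix (QueryBasis X W ℓ) _ ℂ) = diagonal fun a => if a.1 ∈ S then 1 else 0 := by
  ext a b
  by_cases hab : a = b <;> simp [projMat, hab]

variable [Fintype X] [Fintype W]

theorem oracleMat_mem_unitaryGroup (O : X → Fin ℓ → ZMod 2) :
    oracleMat O ∈ unitaryGroup (QueryBasis X W ℓ) ℂ :=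
  oracleMat_eq_permMatrix (W := W) O ▸ permMatrix_mem_unitaryGroup _

theorem projMat_commute_oracleMat (S : Set X) (O : X → Fin ℓ → ZMod 2) :
    Commute (projMat ℓ S : Matrix (QueryBasis X W ℓ) _ ℂ) (oracleMat O) := by
  ext a b
  rw [projMat_eq_diagonal, diagonal_mul, mul_diagonal]
  by_cases hab : a = (b.1, b.2.1 + O b.1, b.2.2) <;> simp [oracleMat, hab]

theorem oracleMat_sub_mul_projMat {S : Set X} {O₀ O₁ : X → Fin ℓ → ZMod 2}
    (hagree : ∀ x ∉ S, O₀ x = O₁ x) :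
    (oracleMat O₀ - oracleMat O₁ : Matrix (QueryBasis X W ℓ) _ ℂ) * projMat ℓ S
      = oracleMat O₀ - oracleMat O₁ := by
  ext a b
  rw [projMat_eq_diagonal, mul_diagonal]
  by_cases hb : b.1 ∈ S
  · simp [hb]
  · simp [hb, oracleMat, hagree b.1 hb]

theorem norm_oracleMat_sub_le {S : Set X} {O₀ O₁ : X → Fin ℓ → ZMod 2}
    (hagree : ∀ x ∉ S, O₀ x = O₁ x) (ψ : EuclideanSpace ℂ (QueryBasis X W ℓ)) :
    ‖toEuclideanCLM (𝕜 := ℂ) (oracleMat O₀) ψ - toEuclideanCLM (𝕜 := ℂ) (oracleMat O₁) ψ‖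
      ≤ 2 * ‖toEuclideanCLM (𝕜 := ℂ) (projMat ℓ S) ψ‖ := by
  set φ := toEuclideanCLM (𝕜 := ℂ) (projMat ℓ S) ψ
  calc ‖toEuclideanCLM (𝕜 := ℂ) (oracleMat O₀) ψ - toEuclideanCLM (𝕜 := ℂ) (oracleMat O₁) ψ‖
      = ‖toEuclideanCLM (𝕜 := ℂ) (oracleMat O₀) φ - toEuclideanCLM (𝕜 := ℂ) (oracleMat O₁) φ‖ := by
        rw [← _root_.sub_apply, ← _root_.sub_apply, ← map_sub, ← toEuclideanCLM_mul_apply,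
          oracleMat_sub_mul_projMat hagree]
    _ ≤ ‖toEuclideanCLM (𝕜 := ℂ) (oracleMat O₀) φ‖ + ‖toEuclideanCLM (𝕜 := ℂ) (oracleMat O₁) φ‖ :=
        norm_sub_le _ _
    _ = 2 * ‖φ‖ := by
        simp only [norm_toEuclideanCLM_of_mem_unitaryGroup (oracleMat_mem_unitaryGroup _), two_mul]

end Oracle

section Algorithm

variable {X W : Type*} {ℓ : ℕ} [Fintype X] [DecidableEq X] [Fintype W] [DecidableEq W] {q : ℕ}

/-- The state `B_i Ō ⋯ Ō B_0 z` of the algorithm `(B_0, …, B_q)` after `i` queries. For `i < q` this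
is the state to which the query number `i`, counted from `0`, is applied. -/
def stateAfter (O : X → Fin ℓ → ZMod 2)
    (B : Fin (q + 1) → Matrix (QueryBasis X W ℓ) (QueryBasis X W ℓ) ℂ)
    (z : EuclideanSpace ℂ (QueryBasis X W ℓ)) (i : Fin (q + 1)) :
    EuclideanSpace ℂ (QueryBasis X W ℓ) :=
  toEuclideanCLM (𝕜 := ℂ) (algMat O i fun j => B (j.castLE i.isLt)) z

variable (O : X → Fin ℓ → ZMod 2)
  {B : Fin (q + 1) → Matrix (QueryBasis X W ℓ) (QueryBasis X W ℓ) ℂ}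
  (z : EuclideanSpace ℂ (QueryBasis X W ℓ))

theorem stateAfter_last_toLp (v : QueryBasis X W ℓ → ℂ) :
    stateAfter O B (WithLp.toLp 2 v) (Fin.last q) = WithLp.toLp 2 (algMat O q B *ᵥ v) := rfl

theorem stateAfter_succ (i : Fin q) :
    stateAfter O B z i.succ = toEuclideanCLM (𝕜 := ℂ) (B i.succ)
      (toEuclideanCLM (𝕜 := ℂ) (oracleMat O) (stateAfter O B z i.castSucc)) := by
  change toEuclideanCLM (𝕜 := ℂ) (B i.succ * oracleMat O * _) z = _
  rw [toEuclideanCLM_mul_apply, toEuclideanCLM_mul_apply]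
  rfl

theorem stateAfter_congr {B' : Fin (q + 1) → Matrix (QueryBasis X W ℓ) (QueryBasis X W ℓ) ℂ}
    {i : Fin (q + 1)} (h : ∀ j ≤ i, B j = B' j) : stateAfter O B z i = stateAfter O B' z i := by
  have hprefix : (fun j : Fin (i + 1) => B (j.castLE i.isLt)) = fun j => B' (j.castLE i.isLt) :=
    funext fun j => h _ (Nat.le_of_lt_succ j.isLt)
  rw [stateAfter, stateAfter, hprefix]

theorem norm_projMat_stateAfter_eq_of_eq_one (S : Set X) {i j : Fin (q + 1)} (hij : i ≤ j)
    (hB : ∀ l, i < l → B l = 1) :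
    ‖toEuclideanCLM (𝕜 := ℂ) (projMat ℓ S) (stateAfter O B z j)‖
      = ‖toEuclideanCLM (𝕜 := ℂ) (projMat ℓ S) (stateAfter O B z i)‖ := by
  induction j using Fin.induction with
  | zero => rw [Fin.le_zero_iff.1 hij]
  | succ j ih =>
    obtain rfl | hlt := hij.eq_or_lt
    · rfl
    · rw [stateAfter_succ, hB _ hlt, map_one, one_apply_eq_self, ← toEuclideanCLM_mul_apply,
        (projMat_commute_oracleMat S O).eq, toEuclideanCLM_mul_apply,
        norm_toEuclideanCLM_of_mem_unitaryGroup (oracleMat_mem_unitaryGroup O),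
        ih (Fin.le_castSucc_iff.2 hlt)]

theorem expect_sq_norm_projMat_stateAfter_le {K : Type*} [Fintype K]
    {z : K → EuclideanSpace ℂ (QueryBasis X W ℓ)} {O : K → X → Fin ℓ → ZMod 2} {S : K → Set X}
    {ε : ℝ} (hfinal : ∀ B : Fin (q + 1) → Matrix (QueryBasis X W ℓ) (QueryBasis X W ℓ) ℂ,
      (∀ i, B i ∈ unitaryGroup (QueryBasis X W ℓ) ℂ) →
      𝔼 k, ‖toEuclideanCLM (𝕜 := ℂ) (projMat ℓ (S k))
        (stateAfter (O k) B (z k) (Fin.last q))‖ ^ 2 ≤ ε)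
    (hB : ∀ i, B i ∈ unitaryGroup (QueryBasis X W ℓ) ℂ) (i : Fin (q + 1)) :
    𝔼 k, ‖toEuclideanCLM (𝕜 := ℂ) (projMat ℓ (S k)) (stateAfter (O k) B (z k) i)‖ ^ 2 ≤ ε := by
  set P : Fin (q + 1) → Matrix (QueryBasis X W ℓ) (QueryBasis X W ℓ) ℂ :=
    fun j => if j ≤ i then B j else 1
  have hP_unitary (j) : P j ∈ unitaryGroup (QueryBasis X W ℓ) ℂ := by
    simp only [P]
    split_ifs
    exacts [hB j, one_mem _]
  refine le_of_eq_of_le (expect_congr rfl fun k _ => ?_) (hfinal P hP_unitary)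
  rw [norm_projMat_stateAfter_eq_of_eq_one _ _ _ (Fin.le_last i) fun j hj => if_neg hj.not_ge,
    stateAfter_congr _ _ fun j hj => (if_pos hj).symm]

open scoped Matrix.Norms.L2Operator

theorem norm_stateAfter_le (hB : ∀ i, ‖B i‖ ≤ 1) (i : Fin (q + 1)) :
    ‖stateAfter O B z i‖ ≤ ‖z‖ := by
  induction i using Fin.induction with
  | zero => exact norm_toEuclideanCLM_le_of_norm_le_one (hB 0) z
  | succ i ih =>
    rw [stateAfter_succ]
    refine (norm_toEuclideanCLM_le_of_norm_le_one (hB _) _).trans ?_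
    rwa [norm_toEuclideanCLM_of_mem_unitaryGroup (oracleMat_mem_unitaryGroup O)]

theorem norm_stateAfter_succ_sub_le {S : Set X} {O₀ O₁ : X → Fin ℓ → ZMod 2}
    (hagree : ∀ x ∉ S, O₀ x = O₁ x) (hB : ∀ i, ‖B i‖ ≤ 1) (i : Fin q) :
    ‖stateAfter O₀ B z i.succ - stateAfter O₁ B z i.succ‖
      ≤ ‖stateAfter O₀ B z i.castSucc - stateAfter O₁ B z i.castSucc‖
        + 2 * ‖toEuclideanCLM (𝕜 := ℂ) (projMat ℓ S) (stateAfter O₀ B z i.castSucc)‖ := by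
  rw [stateAfter_succ, stateAfter_succ, ← map_sub]
  set ψ₀ := stateAfter O₀ B z i.castSucc
  set ψ₁ := stateAfter O₁ B z i.castSucc
  set U₀ := toEuclideanCLM (𝕜 := ℂ) (oracleMat (W := W) O₀)
  set U₁ := toEuclideanCLM (𝕜 := ℂ) (oracleMat (W := W) O₁)
  calc ‖toEuclideanCLM (𝕜 := ℂ) (B i.succ) (U₀ ψ₀ - U₁ ψ₁)‖
      ≤ ‖U₀ ψ₀ - U₁ ψ₁‖ := norm_toEuclideanCLM_le_of_norm_le_one (hB _) _
    _ = ‖U₁ (ψ₀ - ψ₁) + (U₀ ψ₀ - U₁ ψ₀)‖ := by rw [map_sub, add_comm, sub_add_sub_cancel]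
    _ ≤ ‖U₁ (ψ₀ - ψ₁)‖ + ‖U₀ ψ₀ - U₁ ψ₀‖ := norm_add_le _ _
    _ ≤ ‖ψ₀ - ψ₁‖ + 2 * ‖toEuclideanCLM (𝕜 := ℂ) (projMat ℓ S) ψ₀‖ :=
        add_le_add
          (norm_toEuclideanCLM_of_mem_unitaryGroup (oracleMat_mem_unitaryGroup O₁) _).le
          (norm_oracleMat_sub_le hagree ψ₀)

theorem norm_stateAfter_last_sub_le {S : Set X} {O₀ O₁ : X → Fin ℓ → ZMod 2}
    (hagree : ∀ x ∉ S, O₀ x = O₁ x) (hB : ∀ i, ‖B i‖ ≤ 1) :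
    ‖stateAfter O₀ B z (Fin.last q) - stateAfter O₁ B z (Fin.last q)‖
      ≤ ∑ i : Fin q,
        2 * ‖toEuclideanCLM (𝕜 := ℂ) (projMat ℓ S) (stateAfter O₀ B z i.castSucc)‖ := by
  induction q with
  | zero => exact (norm_eq_zero.2 (sub_self _)).le
  | succ q ih =>
    rw [Fin.sum_univ_castSucc]
    exact (norm_stateAfter_succ_sub_le z hagree hB (Fin.last q)).trans
      (add_le_add_left (ih fun i => hB i.castSucc) _)

theorem abs_acceptProb_stateAfter_last_sub_le {S : Set X} {O₀ O₁ : X → Fin ℓ → ZMod 2}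
    (hagree : ∀ x ∉ S, O₀ x = O₁ x) (hB : ∀ i, ‖B i‖ ≤ 1) {z : EuclideanSpace ℂ (QueryBasis X W ℓ)}
    (hz : ‖z‖ ≤ 1)
    {D : Matrix (QueryBasis X W ℓ) (QueryBasis X W ℓ) ℂ} (hD : ‖D‖ ≤ 1) :
    |acceptProb D (stateAfter O₀ B z (Fin.last q)) - acceptProb D (stateAfter O₁ B z (Fin.last q))|
      ≤ 4 * ∑ i : Fin q,
        ‖toEuclideanCLM (𝕜 := ℂ) (projMat ℓ S) (stateAfter O₀ B z i.castSucc)‖ := by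
  have hmeas := abs_acceptProb_sub_le hD ((norm_stateAfter_le O₀ z hB (Fin.last q)).trans hz)
    ((norm_stateAfter_le O₁ z hB (Fin.last q)).trans hz)
  have hhybrid := norm_stateAfter_last_sub_le z hagree hB
  rw [← mul_sum] at hhybrid
  linarith

theorem oracle_indistinguishability_general {K : Type*} [Fintype K] [Nonempty K]
    (z : K → EuclideanSpace ℂ (QueryBasis X W ℓ)) (hz : ∀ k, ‖z k‖ ≤ 1)
    (O₀ O₁ : K → X → Fin ℓ → ZMod 2) (S : K → Set X) (hagree : ∀ k, ∀ x ∉ S k, O₀ k x = O₁ k x)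
    (B : Fin (q + 1) → Matrix (QueryBasis X W ℓ) (QueryBasis X W ℓ) ℂ) (hB : ∀ i, ‖B i‖ ≤ 1)
    (ε : ℝ) (hweight : ∀ i : Fin q, 𝔼 k,
      ‖toEuclideanCLM (𝕜 := ℂ) (projMat ℓ (S k)) (stateAfter (O₀ k) B (z k) i.castSucc)‖ ^ 2 ≤ ε)
    (D : K → Matrix (QueryBasis X W ℓ) (QueryBasis X W ℓ) ℂ) (hD : ∀ k, ‖D k‖ ≤ 1) :
    |𝔼 k, acceptProb (D k) (stateAfter (O₀ k) B (z k) (Fin.last q))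
        - 𝔼 k, acceptProb (D k) (stateAfter (O₁ k) B (z k) (Fin.last q))| ≤ 4 * q * √ε := by
  set w : Fin q → K → ℝ := fun i k =>
    ‖toEuclideanCLM (𝕜 := ℂ) (projMat ℓ (S k)) (stateAfter (O₀ k) B (z k) i.castSucc)‖
  rw [← expect_sub_distrib]
  calc |𝔼 k, (acceptProb (D k) (stateAfter (O₀ k) B (z k) (Fin.last q))
          - acceptProb (D k) (stateAfter (O₁ k) B (z k) (Fin.last q)))|
      ≤ 𝔼 k, 4 * ∑ i, w i k := (abs_expect_le _ _).trans <| expect_le_expect fun k _ =>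
        abs_acceptProb_stateAfter_last_sub_le (hagree k) hB (hz k) (hD k)
    _ = 4 * ∑ i, 𝔼 k, w i k := by rw [← mul_expect, expect_sum_comm]
    _ ≤ 4 * ∑ _i : Fin q, √ε := by
        gcongr with i
        exact (expect_le_sqrt_expect_sq _ _).trans (Real.sqrt_le_sqrt (hweight i))
    _ = 4 * q * √ε := by rw [sum_const, card_univ, Fintype.card_fin, nsmul_eq_mul, mul_assoc]

end Algorithm

/-- **Oracle indistinguishability.** If no `q`-query oracle algorithm can place more than
`ε` (squared) amplitude on the set `S k` where the oracles `O 0 k` and `O 1 k` differ, then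
for every `q`-query algorithm `B` and every family `D k` of operators with `0 ⪯ D k ⪯ I`,
the acceptance probabilities of the measurements `(D k, I - D k)` on the output states
under the two oracles differ on average by at most `4 q √ε`. -/
theorem oracle_indistinguishability
    {X W : Type*} [Fintype X] [DecidableEq X] [Nonempty X]
    [Fintype W] [DecidableEq W] [Nonempty W] (ℓ : ℕ)
    {K : Type*} [Fintype K] [Nonempty K]
    (z : K → (X × (Fin ℓ → ZMod 2) × W) → ℂ)
    (hz : ∀ k, ∑ a, ‖z k a‖ ^ 2 = 1)
    (O : Fin 2 → K → X → Fin ℓ → ZMod 2)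
    (S : K → Set X)
    (hagree : ∀ k x, x ∉ S k → O 0 k x = O 1 k x)
    (q : ℕ) (ε : ℝ) (hε : 0 ≤ ε)
    (hyp : ∀ B : Fin (q + 1) →
        Matrix (X × (Fin ℓ → ZMod 2) × W) (X × (Fin ℓ → ZMod 2) × W) ℂ,
      (∀ i, B i ∈ Matrix.unitaryGroup (X × (Fin ℓ → ZMod 2) × W) ℂ) →
      (∑ k, ∑ a,
          ‖((projMat ℓ (S k)).mulVec ((algMat (O 0 k) q B).mulVec (z k))) a‖ ^ 2)
        / (Fintype.card K : ℝ) ≤ ε)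
    (B : Fin (q + 1) →
      Matrix (X × (Fin ℓ → ZMod 2) × W) (X × (Fin ℓ → ZMod 2) × W) ℂ)
    (hB : ∀ i, B i ∈ Matrix.unitaryGroup (X × (Fin ℓ → ZMod 2) × W) ℂ)
    (D : K → Matrix (X × (Fin ℓ → ZMod 2) × W) (X × (Fin ℓ → ZMod 2) × W) ℂ)
    (hD0 : ∀ k, (D k).PosSemidef)
    (hD1 : ∀ k, (1 - D k).PosSemidef) :
    |(∑ k, (∑ a, (starRingEnd ℂ) (((algMat (O 0 k) q B).mulVec (z k)) a) *
            (((D k).mulVec ((algMat (O 0 k) q B).mulVec (z k))) a)).re)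
          / (Fintype.card K : ℝ)
      - (∑ k, (∑ a, (starRingEnd ℂ) (((algMat (O 1 k) q B).mulVec (z k)) a) *
            (((D k).mulVec ((algMat (O 1 k) q B).mulVec (z k))) a)).re)
          / (Fintype.card K : ℝ)|
    ≤ 4 * q * Real.sqrt ε := by
  simp only [← Fintype.expect_eq_sum_div_card, ← norm_sq_toLp, ← acceptProb_toLp,
    ← stateAfter_last_toLp] at hz hyp ⊢
  exact oracle_indistinguishability_general _
    (fun k => (sq_le_one_iff₀ (norm_nonneg _)).1 (hz k).le) _ _ S hagree B
    (fun i => norm_le_one_of_mem_unitaryGroup (hB i)) ε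
    (fun i => expect_sq_norm_projMat_stateAfter_le hyp hB i.castSucc) D
    fun k => norm_le_one_of_posSemidef (hD0 k) (hD1 k)

end
end
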